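/- arXiv:1406.6665 — 2 statements merged into one kernel-verified Lean document; each statement's English description precedes it below -/
import Mathlib

section
/- Let a, s ≥ 0 be integers, let h^1, …, h^n ∈ Mat(N, ℂ) satisfy the Clifford relations for signature (p, q), let U ∈ Mat(N, ℂ), fix ν ∈ {1,…,n} with h_ν = η_{νν} h^ν, and let ε ∈ {+1, −1}. Writing M^{b,m}_{+1} = F^m(F^b(U)·h_ν) and M^{b,m}_{−1} = F^m(h_ν·F^b(U)), one has M^{a,s}_{ε} = Σ_{i=0}^{a} (−1)^i 2^{a−i} binom(a, i) M^{0, i+s}_{ε·(−1)^{a−i}}. -/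
open Matrix

/-- The diagonal metric entries η^{μμ} of signature (p,q). -/
def etaC (p q : ℕ) (μ : Fin (p + q)) : ℂ := if (μ : ℕ) < p then 1 else -1

/-- The Clifford relations h^μ h^ν + h^ν h^μ = 2 η^{μν} I for signature (p,q). -/
def CliffRel (p q N : ℕ) (h : Fin (p + q) → Matrix (Fin N) (Fin N) ℂ) : Prop :=
  ∀ μ ν : Fin (p + q), h μ * h ν + h ν * h μ =
    (2 * if μ = ν then etaC p q μ else 0) • (1 : Matrix (Fin N) (Fin N) ℂ)

/-- The generator contraction F(U) = Σ_a η^{aa} h^a U h^a. -/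
noncomputable def gencon (p q N : ℕ) (h : Fin (p + q) → Matrix (Fin N) (Fin N) ℂ)
    (U : Matrix (Fin N) (Fin N) ℂ) : Matrix (Fin N) (Fin N) ℂ :=
  ∑ a : Fin (p + q), etaC p q a • (h a * U * h a)

/-- The contraction M^{b,m}_ε(U, h_ν): M^{b,m}_{+1} = F^m(F^b(U)·h_ν) and
M^{b,m}_{−1} = F^m(h_ν·F^b(U)), where h_ν = η_{νν} h^ν and ε ∈ {+1,−1} ⊆ ℤ. -/
noncomputable def Mcon (p q N : ℕ) (h : Fin (p + q) → Matrix (Fin N) (Fin N) ℂ)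
    (U : Matrix (Fin N) (Fin N) ℂ) (ν : Fin (p + q)) (b m : ℕ) (ε : ℤ) :
    Matrix (Fin N) (Fin N) ℂ :=
  if ε = 1 then (gencon p q N h)^[m] ((gencon p q N h)^[b] U * (etaC p q ν • h ν))
  else (gencon p q N h)^[m] ((etaC p q ν • h ν) * (gencon p q N h)^[b] U)

/-!
Let `F` be the contraction, `x = h_ν`, and let `Δ u` be the pair `(u * x, x * u)`. The Clifford
relations give `F u * x = 2 (x * u) - F (u * x)` and its mirror image, that is `Δ ∘ F = P ∘ Δ` with
`P = 2 T - S`, where `T` swaps the two components of a pair and `S` applies `F` to each of them.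
Hence `Δ ∘ F ^ a = P ^ a ∘ Δ`, and since `S` and `T` commute, the binomial theorem expands `P ^ a`.
-/

section SignFlip

variable (R : Type*) [Semiring R] {M : Type*} [AddCommMonoid M] [Module R M]

variable (M) in
/-- The operator `T` swapping the two components of a pair; pairs are encoded as functions on the
sign group `ℤˣ`, matching the index `ε` of `Mcon`. -/
def signFlip : Module.End R (ℤˣ → M) := LinearMap.funLeft R M Neg.neg

variable {R}

theorem signFlip_apply (w : ℤˣ → M) (ε : ℤˣ) : signFlip R M w ε = w (-ε) :=
  rfl

theorem signFlip_pow_apply (k : ℕ) (w : ℤˣ → M) (ε : ℤˣ) :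
    (signFlip R M ^ k) w ε = w (ε * (-1) ^ k) := by
  induction k generalizing ε with
  | zero => simp
  | succ k ih => simp [pow_succ', signFlip_apply, ih]

theorem compLeft_pow_apply {I : Type*} (f : Module.End R M) (k : ℕ) (w : I → M) (i : I) :
    ((f.compLeft I : Module.End R (I → M)) ^ k) w i = (f ^ k) (w i) := by
  induction k with
  | zero => rfl
  | succ k ih => simp [pow_succ', ih]

theorem commute_compLeft_signFlip (f : Module.End R M) :
    Commute (f.compLeft ℤˣ : Module.End R (ℤˣ → M)) (signFlip R M) :=
  rfl

end SignFlip

theorem smul_signFlip_sub_compLeft_pow_apply {R M : Type*} [CommRing R] [AddCommGroup M]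
    [Module R M] (c : R) (f : Module.End R M) (a : ℕ) (w : ℤˣ → M) (ε : ℤˣ) :
    ((c • signFlip R M - f.compLeft ℤˣ) ^ a) w ε =
      ∑ i ∈ Finset.range (a + 1),
        ((-1) ^ i * c ^ (a - i) * (a.choose i : R)) • (f ^ i) (w (ε * (-1) ^ (a - i))) := by
  have hcomm : Commute ((-1 : R) • f.compLeft ℤˣ : Module.End R (ℤˣ → M)) (c • signFlip R M) :=
    ((commute_compLeft_signFlip f).smul_left _).smul_right c
  rw [sub_eq_neg_add, ← neg_one_smul R, hcomm.add_pow, LinearMap.sum_apply, Finset.sum_apply]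
  refine Finset.sum_congr rfl fun i _ => ?_
  simp only [smul_pow, smul_mul_smul_comm, Module.End.mul_apply, Module.End.natCast_apply,
    LinearMap.smul_apply, Pi.smul_apply, compLeft_pow_apply, signFlip_pow_apply, mul_smul,
    Nat.cast_smul_eq_nsmul, map_nsmul, smul_comm (a.choose i)]

section Contraction

variable {R A ι : Type*} [CommSemiring R] [Semiring A] [Algebra R A] [Fintype ι]

/-- The contraction `u ↦ ∑ i, w i • (h i * u * h i)` of a family `h` in an algebra; it is `gencon`
for the weights `etaC`. -/
def contraction (w : ι → R) (h : ι → A) : Module.End R A :=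
  ∑ i, w i • LinearMap.mulLeftRight R (h i, h i)

theorem contraction_apply (w : ι → R) (h : ι → A) (u : A) :
    contraction w h u = ∑ i, w i • (h i * u * h i) := by
  simp [contraction]

variable (R) in
/-- The pair `(u * x, x * u)` as a function of the sign: `+1` stands for multiplication by `x` on
the right and `-1` for multiplication on the left, as in `Mcon`. -/
def sideMul (x : A) : A →ₗ[R] ℤˣ → A :=
  LinearMap.pi fun ε => if ε = 1 then LinearMap.mulRight R x else LinearMap.mulLeft R x

theorem sideMul_apply_one (x u : A) : sideMul R x u 1 = u * x := by
  simp [sideMul]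

theorem sideMul_apply_neg_one (x u : A) : sideMul R x u (-1) = x * u := by
  simp [sideMul]

variable {w t : ι → R} {h : ι → A} {x : A} {c : R}

/-- For generators orthogonal with squares `w i = ±1`, the hypothesis `hsum` with `c = 2` is the
expansion of `2 x` in the generators, so it holds for every `x` in their span. -/
theorem contraction_mul_add_contraction_mul
    (hanti : ∀ i, h i * x + x * h i = algebraMap R A (t i))
    (hsum : ∑ i, (w i * t i) • h i = c • x) (u : A) :
    contraction w h u * x + contraction w h (u * x) = c • (x * u) := by
  calc contraction w h u * x + contraction w h (u * x)
      = ∑ i, w i • (h i * u * (h i * x + x * h i)) := by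
        simp only [contraction_apply, Finset.sum_mul, ← Finset.sum_add_distrib, smul_mul_assoc,
          ← smul_add, mul_add, mul_assoc]
    _ = (∑ i, (w i * t i) • h i) * u := by
        simp only [hanti, Finset.sum_mul, smul_mul_assoc, mul_smul, ← Algebra.commutes,
          ← Algebra.smul_def]
    _ = c • (x * u) := by rw [hsum, smul_mul_assoc]

theorem mul_contraction_add_contraction_mul
    (hanti : ∀ i, h i * x + x * h i = algebraMap R A (t i))
    (hsum : ∑ i, (w i * t i) • h i = c • x) (u : A) :
    x * contraction w h u + contraction w h (x * u) = c • (u * x) := by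
  calc x * contraction w h u + contraction w h (x * u)
      = ∑ i, w i • ((h i * x + x * h i) * (u * h i)) := by
        simp only [contraction_apply, Finset.mul_sum, ← Finset.sum_add_distrib, mul_smul_comm,
          ← smul_add, add_mul, mul_assoc, add_comm]
    _ = u * ∑ i, (w i * t i) • h i := by
        simp only [hanti, Finset.mul_sum, mul_smul_comm, mul_smul, ← Algebra.smul_def]
    _ = c • (u * x) := by rw [hsum, mul_smul_comm]

end Contraction

section Expansion

variable {R A ι : Type*} [CommRing R] [Ring A] [Algebra R A] [Fintype ι]
  {w t : ι → R} {h : ι → A} {x : A} {c : R}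

theorem sideMul_comp_contraction
    (hanti : ∀ i, h i * x + x * h i = algebraMap R A (t i))
    (hsum : ∑ i, (w i * t i) • h i = c • x) :
    sideMul R x ∘ₗ contraction w h =
      (c • signFlip R A - (contraction w h).compLeft ℤˣ) ∘ₗ sideMul R x := by
  ext u ε
  obtain rfl | rfl := Int.units_eq_one_or ε
  · simpa [signFlip_apply, sideMul_apply_one, sideMul_apply_neg_one, eq_sub_iff_add_eq] using
      contraction_mul_add_contraction_mul hanti hsum u
  · simpa [signFlip_apply, sideMul_apply_one, sideMul_apply_neg_one, eq_sub_iff_add_eq] using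
      mul_contraction_add_contraction_mul hanti hsum u

theorem contraction_expansion_general
    (hanti : ∀ i, h i * x + x * h i = algebraMap R A (t i))
    (hsum : ∑ i, (w i * t i) • h i = c • x) (u : A) (a s : ℕ) (ε : ℤˣ) :
    (contraction w h ^ s) (sideMul R x ((contraction w h ^ a) u) ε) =
      ∑ i ∈ Finset.range (a + 1), ((-1) ^ i * c ^ (a - i) * (a.choose i : R)) •
        (contraction w h ^ (i + s)) (sideMul R x u (ε * (-1) ^ (a - i))) := by
  have hpow : sideMul R x ((contraction w h ^ a) u) =
      ((c • signFlip R A - (contraction w h).compLeft ℤˣ) ^ a) (sideMul R x u) :=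
    (LinearMap.congr_fun (Module.End.commute_pow_left_of_commute
      (sideMul_comp_contraction hanti hsum).symm a) u).symm
  simp only [hpow, smul_signFlip_sub_compLeft_pow_apply, map_sum, map_smul, add_comm _ s, pow_add,
    Module.End.mul_apply]

end Expansion

section Clifford

variable {p q N : ℕ} (h : Fin (p + q) → Matrix (Fin N) (Fin N) ℂ)

theorem etaC_mul_self (μ : Fin (p + q)) : etaC p q μ * etaC p q μ = 1 := by
  unfold etaC
  split_ifs <;> norm_num

theorem gencon_eq_contraction : gencon p q N h = contraction (etaC p q) h :=
  funext fun U => (contraction_apply _ h U).symm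

theorem Mcon_eq_contraction_pow_sideMul (U : Matrix (Fin N) (Fin N) ℂ) (ν : Fin (p + q))
    (b m : ℕ) (ε : ℤˣ) :
    Mcon p q N h U ν b m ε =
      (contraction (etaC p q) h ^ m)
        (sideMul ℂ (etaC p q ν • h ν) ((contraction (etaC p q) h ^ b) U) ε) := by
  obtain rfl | rfl := Int.units_eq_one_or ε
  · rw [sideMul_apply_one, Mcon, if_pos Units.val_one, gencon_eq_contraction, Module.End.pow_apply,
      Module.End.pow_apply]
  · rw [sideMul_apply_neg_one, Mcon, if_neg (by decide), gencon_eq_contraction,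
      Module.End.pow_apply, Module.End.pow_apply]

theorem sum_etaC_mul_ite_smul (ν : Fin (p + q)) :
    ∑ i, (etaC p q i * if i = ν then 2 else 0) • h i = (2 : ℂ) • etaC p q ν • h ν := by
  simp [smul_smul, mul_comm]

variable {h}

theorem CliffRel.mul_etaC_smul_add_etaC_smul_mul (hcl : CliffRel p q N h) (ν i : Fin (p + q)) :
    h i * (etaC p q ν • h ν) + (etaC p q ν • h ν) * h i =
      algebraMap ℂ _ (if i = ν then 2 else 0) := by
  rw [mul_smul_comm, smul_mul_assoc, ← smul_add, hcl, smul_smul, Algebra.algebraMap_eq_smul_one]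
  obtain rfl | hne := eq_or_ne i ν
  · rw [if_pos rfl, if_pos rfl, mul_left_comm, etaC_mul_self, mul_one]
  · simp [hne]

end Clifford

/-- M^{a,s}_ε = Σ_{i=0}^{a} (−1)^i 2^{a−i} binom(a,i) M^{0,i+s}_{ε·(−1)^{a−i}}. -/
theorem contraction_expansion
    (p q N : ℕ) (hN : 1 ≤ N)
    (h : Fin (p + q) → Matrix (Fin N) (Fin N) ℂ)
    (hcl : CliffRel p q N h)
    (U : Matrix (Fin N) (Fin N) ℂ) (ν : Fin (p + q))
    (a s : ℕ) (ε : ℤ) (hε : ε = 1 ∨ ε = -1) :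
    Mcon p q N h U ν a s ε =
      ∑ i ∈ Finset.range (a + 1),
        ((-1 : ℂ) ^ i * 2 ^ (a - i) * (a.choose i)) •
          Mcon p q N h U ν 0 (i + s) (ε * (-1) ^ (a - i)) := by
  obtain ⟨ε, rfl⟩ := Int.isUnit_iff.2 hε
  have hsign (k : ℕ) : (ε : ℤ) * (-1) ^ k = (ε * (-1) ^ k : ℤˣ) := by push_cast; rfl
  simpa only [hsign, Mcon_eq_contraction_pow_sideMul, pow_zero, Module.End.one_apply] using
    contraction_expansion_general (hcl.mul_etaC_smul_add_etaC_smul_mul ν)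
      (sum_etaC_mul_ite_smul h ν) U a s ε
end

section
/- Let n = p + q ≥ 2 be even and N = 2^{n/2}. Let h^μ : ℝⁿ → Mat(N, ℂ) (μ = 1,…,n) be continuously differentiable and satisfy the Clifford relations at every point. Set λ_k = (−1)^k (n − 2k), let A be the (n+1)×(n+1) Vandermonde matrix with entries A_{kl} = (λ_l)^k, let B = A^{−1} with entries b_{kl}, and let r_l = Σ_{k=1}^{n} b_{kl}/(n − λ_k) for l = 0,…,n. For each μ and x define W_μ(x) = Σ_{ρ=1}^n η_{ρρ} (∂_μ h^ρ)(x) h^ρ(x) and C_μ(x) = Σ_{l=0}^{n} r_l F^l(W_μ(x)), where F is the generator contraction built from h^1(x),…,h^n(x). Then the primitive field equation holds: ∂_μ h_ρ − [C_μ, h_ρ] = 0 for all μ, ρ = 1,…,n. -/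
open Matrix

attribute [local instance] Matrix.normedAddCommGroup Matrix.normedSpace

/-- λ_k = (−1)^k (n − 2k). -/
def lam (n k : ℕ) : ℤ := (-1) ^ k * ((n : ℤ) - 2 * (k : ℤ))

/-- The (n+1)×(n+1) Vandermonde matrix A_{kl} = (λ_l)^k over ℂ. -/
noncomputable def vand (n : ℕ) : Matrix (Fin (n + 1)) (Fin (n + 1)) ℂ :=
  Matrix.of fun k l : Fin (n + 1) => ((lam n (l : ℕ) : ℂ)) ^ (k : ℕ)

/-- r_l = Σ_{k=1}^{n} b_{kl}/(n − λ_k), where b = A⁻¹. -/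
noncomputable def rcoef (n : ℕ) (l : Fin (n + 1)) : ℂ :=
  ∑ k ∈ Finset.Ioi (0 : Fin (n + 1)),
    (vand n)⁻¹ k l / ((n : ℂ) - (lam n (k : ℕ) : ℂ))

/-- The partial derivative ∂_μ of a matrix-valued function on ℝⁿ. -/
noncomputable def pder {n N : ℕ} (μ : Fin n)
    (f : (Fin n → ℝ) → Matrix (Fin N) (Fin N) ℂ) (x : Fin n → ℝ) :
    Matrix (Fin N) (Fin N) ℂ :=
  fderiv ℝ f x (Pi.single μ 1)

/-- W_μ(x) = Σ_ρ η_{ρρ} (∂_μ h^ρ)(x) h^ρ(x). -/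
noncomputable def Wfun (p q N : ℕ)
    (h : Fin (p + q) → (Fin (p + q) → ℝ) → Matrix (Fin N) (Fin N) ℂ)
    (μ : Fin (p + q)) (x : Fin (p + q) → ℝ) : Matrix (Fin N) (Fin N) ℂ :=
  ∑ ρ : Fin (p + q), etaC p q ρ • (pder μ (h ρ) x * h ρ x)

/-- C_μ(x) = Σ_{l=0}^{n} r_l F^l(W_μ(x)). -/
noncomputable def Cformula (p q N : ℕ)
    (h : Fin (p + q) → (Fin (p + q) → ℝ) → Matrix (Fin N) (Fin N) ℂ)
    (μ : Fin (p + q)) (x : Fin (p + q) → ℝ) : Matrix (Fin N) (Fin N) ℂ :=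
  ∑ l : Fin (p + q + 1),
    rcoef (p + q) l •
      (gencon p q N (fun a => h a x))^[(l : ℕ)] (Wfun p q N h μ x)

/-!
Differentiating the Clifford relations shows that `D a = ∂_μ h^a` solves their linearisation at
`h(x)`, and every such solution is inner: `D a = [C₀, h^a]` for some matrix `C₀`, which is built one
generator at a time. Since `(h^a)⁻¹ = η^{aa} h^a`, it follows that `W_μ = n C₀ - F(C₀)`, where
`F = ∑ T_a` and `T_a` is conjugation by `h^a`. The `T_a` are commuting involutions, so matrices
decompose into simultaneous eigenvectors. If `j` of the signs are `-1`, then `F` has eigenvalue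
`n - 2 j` there, and `j = 0` means commuting with every generator. The values `λ_k` are these
eigenvalues in another order, and the Vandermonde inverse makes `r(X) = ∑ r_l X ^ l` interpolate
`(n - λ_k)⁻¹` for `k ≠ 0` and `0` for `k = 0`. Hence `C_μ = r(F)(n - F) C₀` differs from `C₀` by a
matrix commuting with every generator, and therefore `[C_μ, h^a] = [C₀, h^a] = D a`.
-/

open Module Polynomial Topology

section CommutingInvolutions

variable {ι R M : Type*} [Ring R] [AddCommGroup M] [Module R M] {T : ι → End R M}

/-- The simultaneous eigenvectors, with eigenvalues `±1`, of the operators `T a` for `a ∈ s`.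
The zero vector is included. -/
def signEigenvectors (T : ι → End R M) (s : Finset ι) : Set M :=
  {v | ∀ a ∈ s, T a v = v ∨ T a v = -v}

theorem apply_eq_or_eq_neg_of_commute {f g : End R M} (h : Commute f g) {v : M}
    (hv : f v = v ∨ f v = -v) : f (g v) = g v ∨ f (g v) = -g v := by
  have hfg : f (g v) = g (f v) := LinearMap.congr_fun h.eq v
  rw [hfg]
  exact hv.imp (congrArg g) fun hv => by rw [hv, map_neg]

theorem sum_apply_of_apply_eq_ite [Fintype ι] [DecidableEq ι] {S : Finset ι} {v : M}
    (hv : ∀ a, T a v = if a ∈ S then -v else v) :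
    (∑ a, T a) v = (Fintype.card ι - 2 * S.card : R) • v := by
  have hsign (a : ι) : T a v = (1 - 2 * if a ∈ S then 1 else 0 : R) • v := by
    rw [hv]
    split_ifs
    · rw [mul_one, show (1 - 2 : R) = -1 by norm_num, neg_one_smul]
    · simp
  rw [LinearMap.sum_apply, Finset.sum_congr rfl fun a _ => hsign a, ← Finset.sum_smul,
    Finset.sum_sub_distrib, ← Finset.mul_sum, Finset.sum_boole]
  simp

variable {K : Type*} [Field K] [Module K M] {T : ι → End K M}

theorem span_signEigenvectors [NeZero (2 : K)] (hsq : ∀ a, T a * T a = 1)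
    (hcomm : ∀ a b, Commute (T a) (T b)) (s : Finset ι) :
    Submodule.span K (signEigenvectors T s) = ⊤ := by
  classical
  induction s using Finset.induction_on with
  | empty => simp [signEigenvectors]
  | insert k s _ ih =>
    have mem {g : End K M} (hg : ∀ a, Commute (T a) g) (hTg : T k * g = g ∨ T k * g = -g)
        {v : M} (hv : v ∈ signEigenvectors T s) : g v ∈ signEigenvectors T (insert k s) := by
      have hk : T k (g v) = g v ∨ T k (g v) = -g v :=
        hTg.imp (LinearMap.congr_fun · v) (LinearMap.congr_fun · v)
      exact (Finset.forall_mem_insert ..).2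
        ⟨hk, fun a ha => apply_eq_or_eq_neg_of_commute (hg a) (hv a ha)⟩
    rw [eq_top_iff, ← ih, Submodule.span_le]
    intro v hv
    have hplus : (1 + T k) v ∈ signEigenvectors T (insert k s) :=
      mem (fun a => (Commute.one_right _).add_right (hcomm a k))
        (.inl (by rw [mul_add, hsq, mul_one, add_comm])) hv
    have hminus : (1 - T k) v ∈ signEigenvectors T (insert k s) :=
      mem (fun a => (Commute.one_right _).sub_right (hcomm a k))
        (.inr (by rw [mul_sub, hsq, mul_one, neg_sub])) hv
    have hsplit : v = (2 : K)⁻¹ • ((1 + T k) v + (1 - T k) v) := by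
      rw [← LinearMap.add_apply, add_add_sub_cancel, LinearMap.add_apply, End.one_apply,
        ← two_smul K, inv_smul_smul₀ two_ne_zero]
    rw [hsplit]
    exact Submodule.smul_mem _ _
      (add_mem (Submodule.subset_span hplus) (Submodule.subset_span hminus))

/-- The hypothesis on `g` makes `g(F)`, with `F = ∑ a, T a`, invert `card ι - F` on every
eigenspace of `F` except the one of `card ι`, which consists of the common fixed vectors. -/
theorem apply_sub_aeval_sum [Fintype ι] [NeZero (2 : K)] (hsq : ∀ a, T a * T a = 1)
    (hcomm : ∀ a b, Commute (T a) (T b)) {g : K[X]}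
    (hg : ∀ j ∈ Finset.Icc 1 (Fintype.card ι), g.eval (Fintype.card ι - 2 * j : K) * (2 * j) = 1)
    (a : ι) (u : M) :
    T a (u - aeval (∑ b, T b) g ((Fintype.card ι : K) • u - (∑ b, T b) u)) =
      u - aeval (∑ b, T b) g ((Fintype.card ι : K) • u - (∑ b, T b) u) := by
  classical
  set F := ∑ b, T b
  let Q : End K M := 1 - aeval F g * ((Fintype.card ι : K) • 1 - F)
  suffices T a * Q = Q from LinearMap.congr_fun this u
  refine LinearMap.ext_on (span_signEigenvectors hsq hcomm Finset.univ) fun v hv => ?_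
  let S := Finset.univ.filter fun b => T b v ≠ v
  have hTv (b : ι) : T b v = if b ∈ S then -v else v := by
    split_ifs with hb
    · exact (hv b (Finset.mem_univ b)).resolve_left (Finset.mem_filter.1 hb).2
    · simpa [S] using hb
  have hFv : F v = (Fintype.card ι - 2 * S.card : K) • v := sum_apply_of_apply_eq_ite hTv
  have hQv : Q v = v - (g.eval (Fintype.card ι - 2 * S.card : K) * (2 * S.card)) • v := by
    have : (Fintype.card ι : K) • v - F v = (2 * S.card : K) • v := by
      rw [hFv, ← sub_smul, sub_sub_cancel]
    simp only [Q, LinearMap.sub_apply, End.mul_apply, LinearMap.smul_apply, End.one_apply, this,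
      map_smul, End.aeval_apply_of_mem_apply_eq_smul hFv, smul_smul, mul_comm]
  rw [End.mul_apply, hQv]
  rcases S.eq_empty_or_nonempty with hS | hS
  · simpa [hS] using hTv a
  · rw [hg _ (Finset.mem_Icc.2 ⟨hS.card_pos, S.card_le_univ⟩), one_smul, sub_self, map_zero]

end CommutingInvolutions

section CliffordFamily

attribute [local instance] LieRing.ofAssociativeRing

variable {ι K A : Type*} [Field K] [Ring A] [Algebra K A] {η : ι → K} {e D : ι → A}

/-- Generators `e a` of a nondegenerate diagonal Clifford algebra, realised in an algebra `A`: they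
anticommute pairwise and have nonzero scalar squares `η a`. -/
structure IsCliffordFamily (η : ι → K) (e : ι → A) : Prop where
  ne_zero (a : ι) : η a ≠ 0
  mul_self (a : ι) : e a * e a = algebraMap K A (η a)
  semiconjBy_neg {a b : ι} (hab : a ≠ b) : SemiconjBy (e a) (e b) (-e b)

/-- Conjugation `u ↦ e a * u * (e a)⁻¹` by a Clifford generator, written without inverses in `A`
since `(e a)⁻¹ = (η a)⁻¹ • e a`. -/
def generatorConj (η : ι → K) (e : ι → A) (a : ι) : End K A :=
  (η a)⁻¹ • LinearMap.mulLeftRight K (e a, e a)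

/-- The generator contraction `u ↦ ∑ a, e a * u * (e a)⁻¹` as a linear operator. -/
def generatorContraction [Fintype ι] (η : ι → K) (e : ι → A) : End K A :=
  ∑ a, generatorConj η e a

/-- `D` is a first-order variation of the family `e` preserving its Clifford relations, i.e. it
solves the relations linearised at `e`. -/
def IsCliffordVariation (e D : ι → A) : Prop :=
  ∀ a b, D a * e b + e a * D b + (D b * e a + e b * D a) = 0

theorem generatorConj_apply (η : ι → K) (e : ι → A) (a : ι) (u : A) :
    generatorConj η e a u = (η a)⁻¹ • (e a * u * e a) := rfl

namespace IsCliffordFamily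

theorem generatorConj_mul_self (he : IsCliffordFamily η e) (a : ι) :
    generatorConj η e a * generatorConj η e a = 1 := by
  ext u
  calc generatorConj η e a (generatorConj η e a u)
      = ((η a)⁻¹ * (η a)⁻¹) • (e a * e a * u * (e a * e a)) := by
        simp only [generatorConj_apply, mul_smul_comm, smul_mul_assoc, smul_smul, mul_assoc]
    _ = u := by
        rw [he.mul_self, ← Algebra.commutes, ← Algebra.smul_def, ← Algebra.smul_def, smul_smul,
          smul_smul]
        simp [he.ne_zero a]

theorem commute_generatorConj (he : IsCliffordFamily η e) (a b : ι) :
    Commute (generatorConj η e a) (generatorConj η e b) := by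
  rcases eq_or_ne a b with rfl | hab
  · exact .refl _
  have hba : e b * e a = -(e a * e b) := by rw [(he.semiconjBy_neg hab).eq, neg_mul, neg_neg]
  ext u
  calc generatorConj η e a (generatorConj η e b u)
      = ((η a)⁻¹ * (η b)⁻¹) • (e a * e b * u * (e b * e a)) := by
        simp only [generatorConj_apply, mul_smul_comm, smul_mul_assoc, smul_smul, mul_assoc]
    _ = ((η b)⁻¹ * (η a)⁻¹) • (e b * e a * u * (e a * e b)) := by
        rw [hba, mul_neg, neg_mul, neg_mul, mul_comm (η a)⁻¹]
    _ = generatorConj η e b (generatorConj η e a u) := by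
        simp only [generatorConj_apply, mul_smul_comm, smul_mul_assoc, smul_smul, mul_assoc]

theorem sub_generatorConj (he : IsCliffordFamily η e) (a : ι) (u : A) :
    u - generatorConj η e a u = (η a)⁻¹ • (⁅u, e a⁆ * e a) := by
  rw [Ring.lie_def, sub_mul, mul_assoc u, he.mul_self, ← Algebra.commutes, ← Algebra.smul_def,
    smul_sub, inv_smul_smul₀ (he.ne_zero a), generatorConj_apply]

theorem lie_eq_zero_of_generatorConj_eq_self (he : IsCliffordFamily η e) {a : ι} {u : A}
    (hu : generatorConj η e a u = u) : ⁅u, e a⁆ = 0 := by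
  have hzero : ⁅u, e a⁆ * e a = 0 := by
    have := he.sub_generatorConj a u
    rwa [hu, sub_self, eq_comm, smul_eq_zero_iff_right (inv_ne_zero (he.ne_zero a))] at this
  have : η a • ⁅u, e a⁆ = 0 := by
    rw [Algebra.smul_def, Algebra.commutes, ← he.mul_self, ← mul_assoc, hzero, zero_mul]
  exact (smul_eq_zero_iff_right (he.ne_zero a)).1 this

theorem commute_anticommutator (he : IsCliffordFamily η e) (c : A) (a b : ι) :
    Commute c (e a * e b + e b * e a) := by
  rcases eq_or_ne a b with rfl | hab
  · rw [he.mul_self]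
    exact (Algebra.commute_algebraMap_right _ c).add_right (Algebra.commute_algebraMap_right _ c)
  · rw [(he.semiconjBy_neg hab).eq, neg_mul, neg_add_cancel]
    exact .zero_right c

end IsCliffordFamily

namespace IsCliffordVariation

theorem sub_lie (hD : IsCliffordVariation e D) (he : IsCliffordFamily η e) (c : A) :
    IsCliffordVariation e fun a => D a - ⁅c, e a⁆ := by
  intro a b
  have hlie : ⁅c, e a * e b + e b * e a⁆ = 0 :=
    sub_eq_zero.2 (he.commute_anticommutator c a b).eq
  calc (D a - ⁅c, e a⁆) * e b + e a * (D b - ⁅c, e b⁆) +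
        ((D b - ⁅c, e b⁆) * e a + e b * (D a - ⁅c, e a⁆))
      = D a * e b + e a * D b + (D b * e a + e b * D a) - ⁅c, e a * e b + e b * e a⁆ := by
        simp only [Ring.lie_def]; noncomm_ring
    _ = 0 := by rw [hD, hlie, sub_zero]

variable (K) in
theorem semiconjBy_neg_self [NeZero (2 : K)] (hD : IsCliffordVariation e D) (k : ι) :
    SemiconjBy (D k) (e k) (-e k) := by
  have := hD k k
  rw [← two_smul K, smul_eq_zero_iff_right two_ne_zero] at this
  rw [SemiconjBy, neg_mul]
  exact eq_neg_of_add_eq_zero_left this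

theorem semiconjBy_neg_of_eq_zero (hD : IsCliffordVariation e D) {a k : ι} (ha : D a = 0) :
    SemiconjBy (D k) (e a) (-e a) := by
  have := hD k a
  rw [ha, mul_zero, zero_mul, add_zero, zero_add] at this
  rw [SemiconjBy, neg_mul]
  exact eq_neg_of_add_eq_zero_left this

/-- `D k` anticommutes with `e k` and with every `e a`, `a ∈ s`, so that `D k * e k` commutes with
the latter while its commutator with `e k` is `2 * η k` times `D k`. -/
theorem eq_lie_of_eq_zero [NeZero (2 : K)] [DecidableEq ι] (hD : IsCliffordVariation e D)
    (he : IsCliffordFamily η e) {s : Finset ι} (hs : ∀ a ∈ s, D a = 0) {k : ι} (hk : k ∉ s) :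
    ∀ a ∈ insert k s, D a = ⁅(2 * η k)⁻¹ • (D k * e k), e a⁆ := by
  refine (Finset.forall_mem_insert ..).2 ⟨?_, fun a ha => ?_⟩
  · have hlie : ⁅D k * e k, e k⁆ = (2 * η k) • D k := by
      have hanti : e k * D k = -(D k * e k) := by
        rw [(hD.semiconjBy_neg_self K k).eq, neg_mul, neg_neg]
      rw [Ring.lie_def, ← mul_assoc (e k), hanti, neg_mul, sub_neg_eq_add, ← two_smul K, mul_assoc,
        he.mul_self, ← Algebra.commutes, ← Algebra.smul_def, smul_smul]
    rw [smul_lie, hlie, inv_smul_smul₀ (mul_ne_zero two_ne_zero (he.ne_zero k))]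
  · have hcomm : Commute (D k * e k) (e a) := by
      have hD' := (hD.semiconjBy_neg_of_eq_zero (hs a ha) (k := k)).neg_right
      rw [neg_neg] at hD'
      exact hD'.mul_left (he.semiconjBy_neg (ne_of_mem_of_not_mem ha hk).symm)
    rw [hs a ha, smul_lie, Ring.lie_def, hcomm.eq, sub_self, smul_zero]

theorem exists_eq_lie [NeZero (2 : K)] (hD : IsCliffordVariation e D) (he : IsCliffordFamily η e)
    (s : Finset ι) : ∃ c : A, ∀ a ∈ s, D a = ⁅c, e a⁆ := by
  classical
  induction s using Finset.induction_on with
  | empty => exact ⟨0, by simp⟩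
  | insert k s hk ih =>
    obtain ⟨c, hc⟩ := ih
    have hinner := (hD.sub_lie he c).eq_lie_of_eq_zero he (fun a ha => sub_eq_zero.2 (hc a ha)) hk
    exact ⟨c + (2 * η k)⁻¹ • ((D k - ⁅c, e k⁆) * e k), fun a ha => by
      rw [add_lie, ← hinner a ha, add_sub_cancel]⟩

theorem eq_lie_aeval_generatorContraction [NeZero (2 : K)] [Fintype ι]
    (hD : IsCliffordVariation e D) (he : IsCliffordFamily η e) {g : K[X]}
    (hg : ∀ j ∈ Finset.Icc 1 (Fintype.card ι), g.eval (Fintype.card ι - 2 * j : K) * (2 * j) = 1)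
    (a : ι) :
    D a = ⁅aeval (generatorContraction η e) g (∑ b, (η b)⁻¹ • (D b * e b)), e a⁆ := by
  obtain ⟨c, hc⟩ := hD.exists_eq_lie he Finset.univ
  replace hc (b : ι) : D b = ⁅c, e b⁆ := hc b (Finset.mem_univ b)
  have hsum : ∑ b, (η b)⁻¹ • (D b * e b) =
      (Fintype.card ι : K) • c - (∑ b, generatorConj η e b) c := by
    simp only [hc, ← he.sub_generatorConj, Finset.sum_sub_distrib, Finset.sum_const,
      Finset.card_univ, Nat.cast_smul_eq_nsmul, LinearMap.sum_apply]
  have hfix := apply_sub_aeval_sum he.generatorConj_mul_self he.commute_generatorConj hg a c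
  have hlie := he.lie_eq_zero_of_generatorConj_eq_self hfix
  rw [hc a, generatorContraction, hsum]
  exact sub_eq_zero.1 ((_root_.sub_lie _ _ _).symm.trans hlie)

end IsCliffordVariation

end CliffordFamily

theorem lam_injective {n : ℕ} (hn : Even n) : Function.Injective (lam n) := by
  intro k l h
  unfold lam at h
  rcases Nat.even_or_odd k with hk | hk <;> rcases Nat.even_or_odd l with hl | hl <;>
    simp only [hk.neg_one_pow, hl.neg_one_pow] at h <;> grind

theorem exists_lam_eq {n j : ℕ} (hn : Even n) (hj : j ≤ n) :
    ∃ k : Fin (n + 1), lam n k = (n : ℤ) - 2 * j := by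
  rcases Nat.even_or_odd j with h | h
  · exact ⟨⟨j, by omega⟩, by simp [lam, h.neg_one_pow]⟩
  · have hodd : Odd (n - j) := Nat.Even.sub_odd hj hn h
    refine ⟨⟨n - j, by omega⟩, ?_⟩
    simp only [lam, hodd.neg_one_pow]
    omega

theorem isUnit_det_vand {n : ℕ} (hn : Even n) : IsUnit (vand n).det := by
  have htranspose : vand n = (vandermonde fun l : Fin (n + 1) => (lam n l : ℂ))ᵀ := rfl
  rw [htranspose, det_transpose, isUnit_iff_ne_zero, det_vandermonde_ne_zero_iff]
  exact Int.cast_injective.comp ((lam_injective hn).comp Fin.val_injective)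

/-- The term `k = 0` of the product on the right vanishes, as `n - λ_0 = 0` and `0⁻¹ = 0`. -/
theorem rcoef_eq_vecMul (n : ℕ) :
    rcoef n = (fun k : Fin (n + 1) => ((n : ℂ) - lam n k)⁻¹) ᵥ* (vand n)⁻¹ := by
  ext l
  rw [rcoef, Matrix.vecMul, dotProduct]
  refine Finset.sum_subset_zero_on_sdiff (Finset.subset_univ _) (fun k hk => ?_) fun k _ => ?_
  · obtain rfl : k = 0 := by simpa using hk
    simp [lam]
  · rw [div_eq_inv_mul]

/-- The polynomial with coefficients `r_l`, whose value at the generator contraction maps `W_μ` to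
`C_μ`. -/
noncomputable def rpoly (n : ℕ) : ℂ[X] := ∑ l : Fin (n + 1), C (rcoef n l) * X ^ (l : ℕ)

/-- For `k = 0` both sides vanish, by the convention `0⁻¹ = 0`. -/
theorem eval_lam_rpoly {n : ℕ} (hn : Even n) (k : Fin (n + 1)) :
    (rpoly n).eval (lam n k : ℂ) = ((n : ℂ) - lam n k)⁻¹ := by
  calc (rpoly n).eval (lam n k : ℂ) = (rcoef n ᵥ* vand n) k := by
        simp [rpoly, eval_finsetSum, Matrix.vecMul, dotProduct, vand]
    _ = ((n : ℂ) - lam n k)⁻¹ := by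
        rw [rcoef_eq_vecMul, vecMul_vecMul, nonsing_inv_mul _ (isUnit_det_vand hn), vecMul_one]

theorem eval_rpoly_mul {n j : ℕ} (hn : Even n) (hj : j ∈ Finset.Icc 1 n) :
    (rpoly n).eval (n - 2 * j : ℂ) * (2 * j) = 1 := by
  obtain ⟨hj0, hjn⟩ := Finset.mem_Icc.1 hj
  obtain ⟨k, hk⟩ := exists_lam_eq hn hjn
  have hk' : (n - 2 * j : ℂ) = lam n k := by rw [hk]; push_cast; ring
  have hj' : (2 * j : ℂ) ≠ 0 := mul_ne_zero two_ne_zero (Nat.cast_ne_zero.2 (by omega))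
  rw [hk', eval_lam_rpoly hn, ← hk', sub_sub_cancel, inv_mul_cancel₀ hj']

section PartialDerivative

variable {n N : ℕ} {f g : (Fin n → ℝ) → Matrix (Fin N) (Fin N) ℂ} {x : Fin n → ℝ}

/-- Matrix multiplication as a continuous bilinear map. The norm on matrices is the entrywise
supremum, which is not submultiplicative, so the product rule for normed algebras does not apply. -/
noncomputable def matrixMulL (N : ℕ) : Matrix (Fin N) (Fin N) ℂ →L[ℝ]
    Matrix (Fin N) (Fin N) ℂ →L[ℝ] Matrix (Fin N) (Fin N) ℂ :=
  (LinearMap.mul ℝ (Matrix (Fin N) (Fin N) ℂ)).toContinuousBilinearMap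

theorem differentiableAt_matrix_mul (hf : DifferentiableAt ℝ f x) (hg : DifferentiableAt ℝ g x) :
    DifferentiableAt ℝ (fun y => f y * g y) x :=
  ((matrixMulL N).hasFDerivAt_of_bilinear hf.hasFDerivAt hg.hasFDerivAt).differentiableAt

theorem pder_add (μ : Fin n) (hf : DifferentiableAt ℝ f x) (hg : DifferentiableAt ℝ g x) :
    pder μ (fun y => f y + g y) x = pder μ f x + pder μ g x :=
  DFunLike.congr_fun (fderiv_fun_add hf hg) (Pi.single μ 1)

theorem pder_const_smul (μ : Fin n) (hf : DifferentiableAt ℝ f x) (c : ℂ) :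
    pder μ (fun y => c • f y) x = c • pder μ f x :=
  DFunLike.congr_fun (fderiv_fun_const_smul hf c) (Pi.single μ 1)

theorem pder_mul (μ : Fin n) (hf : DifferentiableAt ℝ f x) (hg : DifferentiableAt ℝ g x) :
    pder μ (fun y => f y * g y) x = pder μ f x * g x + f x * pder μ g x :=
  (DFunLike.congr_fun ((matrixMulL N).fderiv_of_bilinear hf hg) (Pi.single μ 1)).trans
    (add_comm _ _)

end PartialDerivative

section PrimitiveEquation

variable {p q N : ℕ}

theorem inv_etaC (a : Fin (p + q)) : (etaC p q a)⁻¹ = etaC p q a := by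
  unfold etaC
  split_ifs <;> norm_num

theorem CliffRel.isCliffordFamily {e : Fin (p + q) → Matrix (Fin N) (Fin N) ℂ}
    (he : CliffRel p q N e) : IsCliffordFamily (etaC p q) e where
  ne_zero a := by
    unfold etaC
    split_ifs <;> norm_num
  mul_self a := by
    have := he a a
    rw [if_pos rfl, ← two_smul ℂ, mul_smul] at this
    rw [Algebra.algebraMap_eq_smul_one]
    exact smul_right_injective _ (two_ne_zero' ℂ) this
  semiconjBy_neg {a b} hab := by
    have := he a b
    rw [if_neg hab, mul_zero, zero_smul] at this
    rw [SemiconjBy, neg_mul]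
    exact eq_neg_of_add_eq_zero_left this

theorem gencon_eq_generatorContraction (e : Fin (p + q) → Matrix (Fin N) (Fin N) ℂ) :
    gencon p q N e = generatorContraction (etaC p q) e := by
  ext1 u
  simp only [gencon, generatorContraction, LinearMap.sum_apply, generatorConj_apply, inv_etaC]

variable {h : Fin (p + q) → (Fin (p + q) → ℝ) → Matrix (Fin N) (Fin N) ℂ} {x : Fin (p + q) → ℝ}

theorem Cformula_eq_aeval (μ : Fin (p + q)) :
    Cformula p q N h μ x =
      aeval (generatorContraction (etaC p q) fun a => h a x) (rpoly (p + q))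
        (∑ b, (etaC p q b)⁻¹ • (pder μ (h b) x * h b x)) := by
  have hW : ∑ b, (etaC p q b)⁻¹ • (pder μ (h b) x * h b x) = Wfun p q N h μ x := by
    simp only [Wfun, inv_etaC]
  simp only [hW, Cformula, rpoly, gencon_eq_generatorContraction, map_sum, map_mul, aeval_C,
    map_pow, aeval_X, LinearMap.sum_apply, End.mul_apply, Module.algebraMap_end_apply,
    End.pow_apply]

theorem isCliffordVariation_pder (hdiff : ∀ a, DifferentiableAt ℝ (h a) x)
    (hcl : ∀ᶠ y in 𝓝 x, CliffRel p q N fun a => h a y) (μ : Fin (p + q)) :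
    IsCliffordVariation (fun a => h a x) fun a => pder μ (h a) x := by
  intro a b
  have hconst : pder μ (fun y => h a y * h b y + h b y * h a y) x = 0 := by
    have : (fun y => h a y * h b y + h b y * h a y) =ᶠ[𝓝 x]
        fun _ => (2 * if a = b then etaC p q a else 0) • 1 :=
      hcl.mono fun y hy => hy a b
    rw [pder, this.fderiv_eq, fderiv_const_apply, _root_.zero_apply]
  rw [← hconst, pder_add μ (differentiableAt_matrix_mul (hdiff a) (hdiff b))
    (differentiableAt_matrix_mul (hdiff b) (hdiff a)), pder_mul μ (hdiff a) (hdiff b),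
    pder_mul μ (hdiff b) (hdiff a)]

theorem explicit_solution_of_primitive_equation_even_general (heven : Even (p + q))
    (hdiff : ∀ a, DifferentiableAt ℝ (h a) x)
    (hcl : ∀ᶠ y in 𝓝 x, CliffRel p q N fun a => h a y) (μ ρ : Fin (p + q)) :
    pder μ (fun y => etaC p q ρ • h ρ y) x -
      (Cformula p q N h μ x * (etaC p q ρ • h ρ x) -
        (etaC p q ρ • h ρ x) * Cformula p q N h μ x) = 0 := by
  have hD := isCliffordVariation_pder hdiff hcl μ
  have hpder : pder μ (h ρ) x = ⁅Cformula p q N h μ x, h ρ x⁆ := by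
    rw [Cformula_eq_aeval]
    exact hD.eq_lie_aeval_generatorContraction hcl.self_of_nhds.isCliffordFamily
      (fun j hj => by simpa using eval_rpoly_mul heven (by simpa using hj)) ρ
  rw [pder_const_smul μ (hdiff ρ), hpder, Ring.lie_def, mul_smul_comm, smul_mul_assoc,
    ← smul_sub, sub_self]

end PrimitiveEquation

/-- for even n = p + q ≥ 2 and N = 2^{n/2}, the covector
C_μ = Σ_l r_l F^l(Σ_ρ η_{ρρ} (∂_μ h^ρ) h^ρ) solves the primitive field equation
∂_μ h_ρ − [C_μ, h_ρ] = 0 (with h_ρ = η_{ρρ} h^ρ). -/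
theorem explicit_solution_of_primitive_equation_even
    (p q : ℕ) (hn : 2 ≤ p + q) (heven : Even (p + q))
    (h : Fin (p + q) → (Fin (p + q) → ℝ) →
      Matrix (Fin (2 ^ ((p + q) / 2))) (Fin (2 ^ ((p + q) / 2))) ℂ)
    (hdiff : ∀ μ, ContDiff ℝ 1 (h μ))
    (hcl : ∀ x, CliffRel p q (2 ^ ((p + q) / 2)) (fun μ => h μ x)) :
    ∀ μ ρ x,
      pder μ (fun y => etaC p q ρ • h ρ y) x -
        (Cformula p q (2 ^ ((p + q) / 2)) h μ x * (etaC p q ρ • h ρ x) -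
          (etaC p q ρ • h ρ x) * Cformula p q (2 ^ ((p + q) / 2)) h μ x) = 0 := by
  intro μ ρ x
  exact explicit_solution_of_primitive_equation_even_general heven
    (fun a => (hdiff a).differentiable one_ne_zero x) (.of_forall hcl) μ ρ
end
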